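/- arXiv:1104.3745 — 2 statements merged into one kernel-verified Lean document; each statement's English description precedes it below -/
import Mathlib

section
/- Let Ω ⊊ ℝⁿ (n ≥ 2) be a convex proper subdomain and x ∈ Ω. Then for every r > 0 the j-metric ball B_j(x,r) is convex. -/
open Set Metric MeasureTheory

noncomputable section

variable {E : Type*} [NormedAddCommGroup E] [NormedSpace ℝ E]

/-- The quasihyperbolic length of a path `γ` (parametrized on `[0,1]`) in the
domain `Ω`: the integral of `‖γ'(t)‖ / d(γ(t), ∂Ω)`. -/
def qhLength (Ω : Set E) (γ : ℝ → E) : ℝ :=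
  ∫ t in (0:ℝ)..1, ‖deriv γ t‖ / infDist (γ t) (frontier Ω)

/-- A rectifiable curve in `Ω` joining `x` and `y`, formalized as a map on `[0,1]`
which is Lipschitz on `[0,1]` (every rectifiable curve admits such a
parametrization), takes values in `Ω`, and joins `x` to `y`. -/
def IsRectPath (Ω : Set E) (x y : E) (γ : ℝ → E) : Prop :=
  (∃ K : NNReal, LipschitzOnWith K γ (Icc 0 1)) ∧
    MapsTo γ (Icc 0 1) Ω ∧ γ 0 = x ∧ γ 1 = y

/-- The quasihyperbolic metric on `Ω`. -/
def qhDist (Ω : Set E) (x y : E) : ℝ :=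
  sInf (qhLength Ω '' {γ | IsRectPath Ω x y γ})

/-- The quasihyperbolic ball. -/
def qhBall (Ω : Set E) (x : E) (r : ℝ) : Set E :=
  {y ∈ Ω | qhDist Ω x y < r}

/-- The distance ratio metric (`j`-metric) on `Ω`. -/
def jDist (Ω : Set E) (x y : E) : ℝ :=
  Real.log (1 + dist x y / min (infDist x (frontier Ω)) (infDist y (frontier Ω)))

/-- The `j`-metric ball. -/
def jBall (Ω : Set E) (x : E) (r : ℝ) : Set E :=
  {y ∈ Ω | jDist Ω x y < r}

/-- `G` is strictly starlike with respect to `x`: it is starlike with respect to `x`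
and every half-line emanating from `x` meets `∂G` at exactly one point. -/
def StrictlyStarlike (G : Set E) (x : E) : Prop :=
  StarConvex ℝ x G ∧
    ∀ v : E, v ≠ 0 → ∃! p : E, p ∈ frontier G ∧ ∃ t : ℝ, 0 < t ∧ p = x + t • v

/-- `G` is strictly convex: it is strictly starlike with respect to each of its points. -/
def StrictlyConvexSet (G : Set E) : Prop :=
  ∀ x ∈ G, StrictlyStarlike G x

/-- A half-line: `{t • v + z : t > 0}` or `{t • v + z : t ≥ 0}` with `v ≠ 0`. -/
def IsHalfline (L : Set E) : Prop :=
  ∃ z v : E, v ≠ 0 ∧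
    (L = {p | ∃ t : ℝ, 0 < t ∧ p = t • v + z} ∨
      L = {p | ∃ t : ℝ, 0 ≤ t ∧ p = t • v + z})

/-- `G` is close-to-convex: its complement can be covered with pairwise
non-intersecting half-lines. -/
def CloseToConvex (G : Set E) : Prop :=
  ∃ 𝒮 : Set (Set E), (∀ L ∈ 𝒮, IsHalfline L) ∧ 𝒮.PairwiseDisjoint id ∧ Gᶜ = ⋃₀ 𝒮

end

/-!
In a convex set the distance to the boundary is concave: if the balls of radii `δ`, `ε` about `y`,
`z` lie in the set, then so does the ball of radius `a * δ + b * ε` about `a • y + b • z`. On the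
other hand `j(x, y) < r` says that `|x - y| < (exp r - 1) * min (d x) (d y)`, so the `j`-ball is a
strict sublevel set of the convex function `y ↦ |x - y| - (exp r - 1) * min (d x) (d y)`.
-/

section Frontier

lemma subset_interior_of_isPreconnected_of_disjoint_frontier {X : Type*} [TopologicalSpace X]
    {s t : Set X} (ht : IsPreconnected t) (hdisj : Disjoint t (frontier s))
    (hst : (t ∩ s).Nonempty) : t ⊆ interior s := by
  have hcover : t ⊆ interior s ∪ interior sᶜ := by
    rw [interior_compl]
    intro p hp
    by_cases hps : p ∈ closure s
    · exact .inl (by_contra fun hpi => hdisj.notMem_of_mem_left hp ⟨hps, hpi⟩)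
    · exact .inr hps
  have hmeets : (t ∩ interior s).Nonempty := by
    obtain ⟨p, hpt, hps⟩ := hst
    exact ⟨p, hpt, (mem_interior_iff_notMem_frontier hps).2 (hdisj.notMem_of_mem_left hpt)⟩
  exact ht.subset_left_of_subset_union isOpen_interior isOpen_interior
    (disjoint_compl_right.mono interior_subset interior_subset) hcover hmeets

lemma le_infDist_frontier_of_ball_subset {X : Type*} [PseudoMetricSpace X] {s : Set X} {x : X}
    {δ : ℝ} (hs : (frontier s).Nonempty) (h : ball x δ ⊆ s) : δ ≤ infDist x (frontier s) := by
  refine (le_infDist hs).2 fun p hp => ?_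
  by_contra! hlt
  exact disjoint_interior_frontier.notMem_of_mem_left
    (interior_maximal h isOpen_ball (mem_ball'.2 hlt)) hp

lemma infDist_frontier_pos {X : Type*} [PseudoMetricSpace X] {s : Set X} {x : X}
    (hs : (frontier s).Nonempty) (hx : x ∈ interior s) : 0 < infDist x (frontier s) :=
  (isClosed_frontier.notMem_iff_infDist_pos hs).1
    (disjoint_interior_frontier.notMem_of_mem_left hx)

end Frontier

section NormedSpace

variable {E : Type*} [NormedAddCommGroup E] [NormedSpace ℝ E]

lemma ball_infDist_frontier_subset {s : Set E} {y : E} (hy : y ∈ s) :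
    ball y (infDist y (frontier s)) ⊆ s := by
  rcases (infDist_nonneg (x := y) (s := frontier s)).eq_or_lt with hzero | hpos
  · simp [← hzero]
  · exact (subset_interior_of_isPreconnected_of_disjoint_frontier (convex_ball y _).isPreconnected
      disjoint_ball_infDist ⟨y, mem_ball_self hpos, hy⟩).trans interior_subset

-- A point `p` of the new ball is the combination of `y` and `z` moved in the common direction
-- `p - (a • y + b • z)`, each proportionally to the radius of its ball.
lemma ball_combo_subset_of_convex {s : Set E} (hs : Convex ℝ s) {y z : E} (hy : y ∈ s)
    (hz : z ∈ s) {δ ε : ℝ} (hδ : 0 ≤ δ) (hε : 0 ≤ ε) (hyδ : ball y δ ⊆ s) (hzε : ball z ε ⊆ s)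
    {a b : ℝ} (ha : 0 ≤ a) (hb : 0 ≤ b) (hab : a + b = 1) :
    ball (a • y + b • z) (a * δ + b * ε) ⊆ s := by
  intro p hp
  set R := a * δ + b * ε with hR
  have hRpos : 0 < R := pos_of_mem_ball hp
  set u := p - (a • y + b • z) with hu
  have hu_lt : ‖u‖ < R := mem_ball_iff_norm.1 hp
  have shift_mem {q : E} {η : ℝ} (hq : q ∈ s) (hη : 0 ≤ η) (hqη : ball q η ⊆ s) :
      q + (η / R) • u ∈ s := by
    rcases hη.eq_or_lt with rfl | hη
    · simpa using hq
    · refine hqη (mem_ball_iff_norm.2 ?_)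
      rw [add_sub_cancel_left, norm_smul_of_nonneg (by positivity), div_mul_eq_mul_div,
        div_lt_iff₀ hRpos]
      gcongr
  have hsplit : p = a • (y + (δ / R) • u) + b • (z + (ε / R) • u) := by
    have hweights : a * (δ / R) + b * (ε / R) = 1 := by
      rw [← mul_div_assoc, ← mul_div_assoc, ← add_div, ← hR, div_self hRpos.ne']
    calc p = (a • y + b • z) + (1 : ℝ) • u := by rw [hu]; module
      _ = a • (y + (δ / R) • u) + b • (z + (ε / R) • u) := by rw [← hweights]; module
  rw [hsplit]
  exact hs (shift_mem hy hδ hyδ) (shift_mem hz hε hzε) ha hb hab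

lemma concaveOn_infDist_frontier {s : Set E} (hs : Convex ℝ s) :
    ConcaveOn ℝ s fun y => infDist y (frontier s) := by
  rcases (frontier s).eq_empty_or_nonempty with hempty | hne
  · simpa [hempty] using concaveOn_const (0 : ℝ) hs
  · exact ⟨hs, fun y hy z hz a b ha hb hab => le_infDist_frontier_of_ball_subset hne <|
      ball_combo_subset_of_convex hs hy hz infDist_nonneg infDist_nonneg
        (ball_infDist_frontier_subset hy) (ball_infDist_frontier_subset hz) ha hb hab⟩

end NormedSpace

section JMetric

variable {E : Type*} [NormedAddCommGroup E] {Ω : Set E} {x y : E} {r : ℝ}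

lemma jDist_nonneg (Ω : Set E) (x y : E) : 0 ≤ jDist Ω x y :=
  Real.log_nonneg <| le_add_of_nonneg_right <|
    div_nonneg dist_nonneg (le_min infDist_nonneg infDist_nonneg)

lemma jBall_eq_empty (hr : r ≤ 0) : jBall Ω x r = ∅ :=
  eq_empty_of_forall_notMem fun y hy => (hr.trans (jDist_nonneg Ω x y)).not_gt hy.2

lemma jDist_lt_iff (hx : 0 < infDist x (frontier Ω)) (hy : 0 < infDist y (frontier Ω)) :
    jDist Ω x y < r ↔
      dist x y < (Real.exp r - 1) * min (infDist x (frontier Ω)) (infDist y (frontier Ω)) := by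
  have hmin := lt_min hx hy
  rw [jDist, Real.log_lt_iff_lt_exp (by positivity), ← lt_sub_iff_add_lt', div_lt_iff₀ hmin]

theorem j_ball_convex_of_convex_domain_general [NormedSpace ℝ E] (hopen : IsOpen Ω)
    (hconv : Convex ℝ Ω) (hproper : Ω ≠ univ) (hx : x ∈ Ω) (r : ℝ) :
    Convex ℝ (jBall Ω x r) := by
  rcases le_or_gt r 0 with hr | hr
  · rw [jBall_eq_empty hr]
    exact convex_empty
  have hfrontier : (frontier Ω).Nonempty := nonempty_frontier_iff.2 ⟨⟨x, hx⟩, hproper⟩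
  have hpos {y : E} (hy : y ∈ Ω) : 0 < infDist y (frontier Ω) :=
    infDist_frontier_pos hfrontier (hopen.interior_eq.symm ▸ hy)
  let f (y : E) : ℝ :=
    dist y x - (Real.exp r - 1) * min (infDist x (frontier Ω)) (infDist y (frontier Ω))
  have hf : ConvexOn ℝ Ω f :=
    (convexOn_dist x hconv).sub <|
      ((concaveOn_const _ hconv).inf (concaveOn_infDist_frontier hconv)).smul
        (sub_nonneg.2 (Real.one_le_exp hr.le))
  have hball : jBall Ω x r = {y ∈ Ω | f y < 0} := by
    ext y
    refine and_congr_right fun hy => ?_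
    rw [jDist_lt_iff (hpos hx) (hpos hy), dist_comm, ← sub_neg]
  rw [hball]
  exact hf.convex_lt 0

end JMetric

/-- in a convex proper subdomain of `ℝⁿ`, all `j`-metric balls are convex. -/
theorem j_ball_convex_of_convex_domain (n : ℕ) (hn : 2 ≤ n)
    (Ω : Set (EuclideanSpace ℝ (Fin n)))
    (hopen : IsOpen Ω) (hne : Ω.Nonempty) (hconv : Convex ℝ Ω) (hproper : Ω ≠ univ)
    (x : EuclideanSpace ℝ (Fin n)) (hx : x ∈ Ω) (r : ℝ) (hr : 0 < r) :
    Convex ℝ (jBall Ω x r) := by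
  exact j_ball_convex_of_convex_domain_general hopen hconv hproper hx r
end

section
/- Let Ω ⊊ ℝⁿ (n ≥ 2) be a convex proper subdomain. Then for every x ∈ Ω and every r > 0 the quasihyperbolic ball B_k(x,r) is strictly convex. -/
/-!
A point `y` lies in the ball `B_k(x, r)` iff some curve from `x` to `y` has quasihyperbolic speed at
most some `ρ < r` at every point: reparametrize a curve of length `< ρ` by (slightly perturbed)
arc length. Such curves are stable under three operations, one for each property of the ball.
* Since `Ω` is convex, `d(·, ∂Ω)` is concave on `Ω`, so convex combinations of curves of speed at
  most `ρ` have speed at most `ρ`, and the ball is convex.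
* Adding a small linear drift `t • v` increases the speed only slightly, so the ball is open.
* `d(·, ∂Ω)` is 1-Lipschitz, so by Grönwall a curve of speed at most `ρ` stays within
  `(exp ρ - 1) * d(x, ∂Ω)` of its starting point, and the ball is bounded.
A half-line from a point of a bounded open convex set leaves it exactly once.
-/

open Set Metric MeasureTheory

section QuasihyperbolicConvexity

open Filter
open scoped Topology Pointwise NNReal

section Preliminaries

variable {F : Type*} [NormedAddCommGroup F] [NormedSpace ℝ F]

lemma strictlyConvexSet_of_convex_of_isOpen_of_isBounded {G : Set F} (hconv : Convex ℝ G)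
    (hopen : IsOpen G) (hbdd : Bornology.IsBounded G) : StrictlyConvexSet G := by
  intro y hy
  refine ⟨hconv.starConvex hy, fun v hv => ?_⟩
  let G₀ : Set F := Homeomorph.addLeft y ⁻¹' G
  have hG₀_conv : Convex ℝ G₀ := hconv.translate_preimage_right y
  have hG₀_nhds : G₀ ∈ 𝓝 (0 : F) :=
    (Homeomorph.addLeft y).continuous.continuousAt.preimage_mem_nhds
      (hopen.mem_nhds (by simpa using hy))
  have hG₀_bdd : Bornology.IsBounded G₀ :=
    (IsometryEquiv.addLeft y).isometry.antilipschitz.isBounded_preimage hbdd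
  have hgauge : 0 < gauge G₀ v :=
    (gauge_pos (absorbent_nhds_zero hG₀_nhds)
      (NormedSpace.isVonNBounded_of_isBounded ℝ hG₀_bdd)).2 hv
  have mem_frontier_iff : ∀ t : ℝ, 0 < t → (y + t • v ∈ frontier G ↔ t * gauge G₀ v = 1) := by
    intro t ht
    rw [← smul_eq_mul, ← gauge_smul_of_nonneg ht.le,
      gauge_eq_one_iff_mem_frontier hG₀_conv hG₀_nhds, ← Homeomorph.preimage_frontier]
    rfl
  refine ⟨y + (gauge G₀ v)⁻¹ • v, ⟨(mem_frontier_iff _ (inv_pos.2 hgauge)).2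
    (inv_mul_cancel₀ hgauge.ne'), _, inv_pos.2 hgauge, rfl⟩, ?_⟩
  rintro _ ⟨hfrontier, t, ht, rfl⟩
  rw [eq_inv_of_mul_eq_one_left ((mem_frontier_iff t ht).1 hfrontier)]

lemma exists_lipschitzOnWith_invOn_of_dist_le {φ : ℝ → ℝ} {a b : ℝ} {K : ℝ≥0} (hab : a ≤ b)
    (hcont : ContinuousOn φ (Icc a b))
    (hdist : ∀ s ∈ Icc a b, ∀ t ∈ Icc a b, dist s t ≤ K * dist (φ s) (φ t)) :
    ∃ ψ : ℝ → ℝ, LipschitzOnWith K ψ (Icc (φ a) (φ b)) ∧ MapsTo ψ (Icc (φ a) (φ b)) (Icc a b) ∧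
      InvOn ψ φ (Icc a b) (Icc (φ a) (φ b)) := by
  have hsurj : SurjOn φ (Icc a b) (Icc (φ a) (φ b)) := intermediate_value_Icc hab hcont
  have hinj : InjOn φ (Icc a b) := fun s hs t ht hst =>
    dist_le_zero.1 ((hdist s hs t ht).trans_eq (by rw [hst, dist_self, mul_zero]))
  have hmaps := hsurj.mapsTo_invFunOn
  have hright := hsurj.rightInvOn_invFunOn
  refine ⟨Function.invFunOn φ (Icc a b), LipschitzOnWith.of_dist_le_mul fun s hs t ht => ?_, hmaps,
    hinj.leftInvOn_invFunOn, hright⟩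
  simpa only [hright hs, hright ht] using hdist _ (hmaps hs) _ (hmaps ht)

lemma intervalIntegrable_norm_deriv_of_lipschitzOnWith [CompleteSpace F] {γ : ℝ → F} {K : ℝ≥0}
    {a b : ℝ} (hab : a ≤ b) (hγ : LipschitzOnWith K γ (Icc a b)) :
    IntervalIntegrable (fun t => ‖deriv γ t‖) volume a b := by
  rw [intervalIntegrable_iff_integrableOn_Ioo_of_le hab]
  borelize F
  refine Measure.integrableOn_of_bounded (M := K) (by simp)
    (measurable_deriv γ).norm.aestronglyMeasurable ?_
  filter_upwards [self_mem_ae_restrict measurableSet_Ioo] with t ht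
  rw [norm_norm]
  exact norm_deriv_le_of_lipschitzOn (Icc_mem_nhds ht.1 ht.2) hγ

lemma norm_sub_le_integral_norm_deriv_of_lipschitzOnWith [FiniteDimensional ℝ F] {γ : ℝ → F}
    {K : ℝ≥0} {a b : ℝ} (hab : a ≤ b) (hγ : LipschitzOnWith K γ (Icc a b)) :
    ‖γ b - γ a‖ ≤ ∫ t in a..b, ‖deriv γ t‖ := by
  have : CompleteSpace F := FiniteDimensional.complete ℝ F
  obtain ⟨ℓ, hℓ_norm, hℓ⟩ := exists_dual_vector'' ℝ (γ b - γ a)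
  have hγ' : LipschitzOnWith K γ (uIcc a b) := by rwa [uIcc_of_le hab]
  have hac : AbsolutelyContinuousOnInterval (ℓ ∘ γ) a b :=
    (ℓ.lipschitz.comp_lipschitzOnWith hγ').absolutelyContinuousOnInterval
  calc ‖γ b - γ a‖ = ∫ t in a..b, deriv (ℓ ∘ γ) t := by
        rw [hac.integral_deriv_eq_sub, Function.comp_apply, Function.comp_apply, ← map_sub, hℓ]
        rfl
    _ ≤ ∫ t in a..b, ‖deriv γ t‖ := by
        refine intervalIntegral.integral_mono_ae_restrict hab hac.intervalIntegrable_deriv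
          (intervalIntegrable_norm_deriv_of_lipschitzOnWith hab hγ) ?_
        refine (ae_restrict_iff' measurableSet_Icc).2 ?_
        filter_upwards [hγ'.absolutelyContinuousOnInterval.boundedVariationOn
          |>.ae_differentiableAt_of_mem_uIcc] with t hdiff ht
        rw [(ℓ.hasFDerivAt.comp_hasDerivAt t
          (hdiff (by rwa [uIcc_of_le hab])).hasDerivAt).deriv]
        exact (Real.le_norm_self _).trans (ℓ.le_of_opNorm_le hℓ_norm _) |>.trans_eq (one_mul _)

end Preliminaries

section BoundaryDistance

variable {E : Type*} [NormedAddCommGroup E] [NormedSpace ℝ E] {Ω : Set E}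

lemma infDist_frontier_pos_s13 (hopen : IsOpen Ω) (hproper : Ω ≠ univ) {p : E} (hp : p ∈ Ω) :
    0 < infDist p (frontier Ω) := by
  refine (isClosed_frontier.notMem_iff_infDist_pos
    (nonempty_frontier_iff.2 ⟨⟨p, hp⟩, hproper⟩)).1 fun hfrontier => ?_
  rw [hopen.frontier_eq] at hfrontier
  exact hfrontier.2 hp

lemma ball_infDist_frontier_subset_s13 {p : E} (hp : p ∈ Ω) :
    ball p (infDist p (frontier Ω)) ⊆ Ω := by
  rcases (ball p (infDist p (frontier Ω))).eq_empty_or_nonempty with hempty | hne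
  · exact hempty.subset.trans (empty_subset Ω)
  have hsub : ball p (infDist p (frontier Ω)) ⊆ interior Ω ∪ interior Ωᶜ := by
    rw [← compl_frontier_eq_union_interior]
    exact disjoint_ball_infDist.subset_compl_right
  have hcenter : p ∈ ball p (infDist p (frontier Ω)) := mem_ball_self (nonempty_ball.1 hne)
  have hp_int : p ∈ interior Ω :=
    (hsub hcenter).resolve_right fun hp_ext => interior_subset hp_ext hp
  exact ((convex_ball _ _).isPreconnected.subset_left_of_subset_union isOpen_interior
    isOpen_interior (disjoint_compl_right.mono interior_subset interior_subset) hsub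
    ⟨p, hcenter, hp_int⟩).trans interior_subset

lemma concaveOn_infDist_frontier_s13 (hopen : IsOpen Ω) (hconv : Convex ℝ Ω) :
    ConcaveOn ℝ Ω fun p => infDist p (frontier Ω) := by
  rcases (frontier Ω).eq_empty_or_nonempty with hempty | hne
  · simpa only [hempty, infDist_empty] using concaveOn_const 0 hconv
  have hproper : Ω ≠ univ := by
    rintro rfl
    simp at hne
  rw [concaveOn_iff_forall_pos]
  refine ⟨hconv, fun p hp q hq a b ha hb hab => ?_⟩
  have hball : ball (a • p + b • q)
      (a * infDist p (frontier Ω) + b * infDist q (frontier Ω)) ⊆ Ω :=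
    calc ball (a • p + b • q) (a * infDist p (frontier Ω) + b * infDist q (frontier Ω))
        = a • ball p (infDist p (frontier Ω)) + b • ball q (infDist q (frontier Ω)) := by
          rw [_root_.smul_ball ha.ne', _root_.smul_ball hb.ne', Real.norm_of_nonneg ha.le,
            Real.norm_of_nonneg hb.le, ball_add_ball
              (mul_pos ha (infDist_frontier_pos_s13 hopen hproper hp))
              (mul_pos hb (infDist_frontier_pos_s13 hopen hproper hq))]
      _ ⊆ a • Ω + b • Ω := Set.add_subset_add
          (smul_set_mono (ball_infDist_frontier_subset_s13 hp))
          (smul_set_mono (ball_infDist_frontier_subset_s13 hq))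
      _ ⊆ Ω := hconv.set_combo_subset ha.le hb.le hab
  refine (le_infDist hne).2 fun w hw => not_lt.1 fun hlt => ?_
  rw [hopen.frontier_eq] at hw
  exact hw.2 (hball (mem_ball'.2 hlt))

end BoundaryDistance

section Length

variable {E : Type*} [NormedAddCommGroup E] {Ω : Set E} {x y : E} {γ : ℝ → E}

lemma continuousOn_of_isRectPath (hγ : IsRectPath Ω x y γ) : ContinuousOn γ (Icc 0 1) :=
  hγ.1.choose_spec.continuousOn

lemma continuousOn_infDist_frontier_of_isRectPath (hγ : IsRectPath Ω x y γ) :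
    ContinuousOn (fun t => infDist (γ t) (frontier Ω)) (Icc 0 1) :=
  (continuous_infDist_pt _).comp_continuousOn (continuousOn_of_isRectPath hγ)

variable [NormedSpace ℝ E]

/-- The integrand of `qhLength`: the speed of `γ` in the quasihyperbolic metric of `Ω`. It is `0`
where `γ` is not differentiable, which for a Lipschitz curve in finite dimension is a null set. -/
noncomputable def qhSpeed (Ω : Set E) (γ : ℝ → E) (t : ℝ) : ℝ :=
  ‖deriv γ t‖ / infDist (γ t) (frontier Ω)

lemma qhSpeed_nonneg (Ω : Set E) (γ : ℝ → E) (t : ℝ) : 0 ≤ qhSpeed Ω γ t :=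
  div_nonneg (norm_nonneg _) infDist_nonneg

lemma qhLength_nonneg (Ω : Set E) (γ : ℝ → E) : 0 ≤ qhLength Ω γ :=
  intervalIntegral.integral_nonneg zero_le_one fun t _ => qhSpeed_nonneg Ω γ t

lemma qhDist_le_qhLength (hγ : IsRectPath Ω x y γ) : qhDist Ω x y ≤ qhLength Ω γ :=
  csInf_le ⟨0, forall_mem_image.2 fun γ _ => qhLength_nonneg Ω γ⟩ (mem_image_of_mem _ hγ)

lemma isRectPath_lineMap (hconv : Convex ℝ Ω) (hx : x ∈ Ω) (hy : y ∈ Ω) :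
    IsRectPath Ω x y (AffineMap.lineMap x y : ℝ → E) :=
  ⟨⟨_, (lipschitzWith_lineMap x y).lipschitzOnWith⟩, hconv.mapsTo_lineMap hx hy,
    AffineMap.lineMap_apply_zero x y, AffineMap.lineMap_apply_one x y⟩

lemma exists_isRectPath_qhLength_lt (hconv : Convex ℝ Ω) (hx : x ∈ Ω) (hy : y ∈ Ω) {r : ℝ}
    (hr : qhDist Ω x y < r) : ∃ γ, IsRectPath Ω x y γ ∧ qhLength Ω γ < r := by
  have hne : {γ | IsRectPath Ω x y γ}.Nonempty := ⟨_, isRectPath_lineMap hconv hx hy⟩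
  obtain ⟨_, ⟨γ, hγ, rfl⟩, hlt⟩ := exists_lt_of_csInf_lt (hne.image (qhLength Ω)) hr
  exact ⟨γ, hγ, hlt⟩

lemma intervalIntegrable_qhSpeed [CompleteSpace E] (hopen : IsOpen Ω) (hproper : Ω ≠ univ)
    (hγ : IsRectPath Ω x y γ) {a b : ℝ} (ha : a ∈ Icc (0 : ℝ) 1) (hb : b ∈ Icc (0 : ℝ) 1) :
    IntervalIntegrable (qhSpeed Ω γ) volume a b := by
  obtain ⟨K, hK⟩ := hγ.1
  have hunit : IntervalIntegrable (qhSpeed Ω γ) volume 0 1 := by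
    change IntervalIntegrable (fun t => ‖deriv γ t‖ / infDist (γ t) (frontier Ω)) volume 0 1
    simp only [div_eq_mul_inv]
    refine (intervalIntegrable_norm_deriv_of_lipschitzOnWith zero_le_one hK).mul_continuousOn ?_
    rw [uIcc_of_le zero_le_one]
    exact (continuousOn_infDist_frontier_of_isRectPath hγ).inv₀ fun t ht =>
      (infDist_frontier_pos_s13 hopen hproper (hγ.2.1 ht)).ne'
  refine hunit.mono_set ?_
  rw [uIcc_of_le zero_le_one]
  exact uIcc_subset_Icc ha hb

variable [FiniteDimensional ℝ E]

lemma norm_sub_le_mul_integral_qhSpeed (hopen : IsOpen Ω) (hproper : Ω ≠ univ)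
    (hγ : IsRectPath Ω x y γ) {a b M : ℝ} (hab : a ≤ b) (hsub : Icc a b ⊆ Icc 0 1)
    (hM : ∀ t ∈ Icc a b, infDist (γ t) (frontier Ω) ≤ M) :
    ‖γ b - γ a‖ ≤ M * ∫ t in a..b, qhSpeed Ω γ t := by
  have : CompleteSpace E := FiniteDimensional.complete ℝ E
  obtain ⟨K, hK⟩ := hγ.1
  have hint := intervalIntegrable_qhSpeed hopen hproper hγ
    (hsub (left_mem_Icc.2 hab)) (hsub (right_mem_Icc.2 hab))
  have hK' := hK.mono hsub
  calc ‖γ b - γ a‖ ≤ ∫ t in a..b, ‖deriv γ t‖ :=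
        norm_sub_le_integral_norm_deriv_of_lipschitzOnWith hab hK'
    _ ≤ ∫ t in a..b, M * qhSpeed Ω γ t := by
        refine intervalIntegral.integral_mono_on hab
          (intervalIntegrable_norm_deriv_of_lipschitzOnWith hab hK') (hint.const_mul M)
          fun t ht => ?_
        have hpos := infDist_frontier_pos_s13 hopen hproper (hγ.2.1 (hsub ht))
        calc ‖deriv γ t‖ = infDist (γ t) (frontier Ω) * qhSpeed Ω γ t :=
              (mul_div_cancel₀ _ hpos.ne').symm
          _ ≤ M * qhSpeed Ω γ t :=
              mul_le_mul_of_nonneg_right (hM t ht) (qhSpeed_nonneg Ω γ t)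
    _ = M * ∫ t in a..b, qhSpeed Ω γ t := intervalIntegral.integral_const_mul _ _

lemma eventually_norm_sub_le_mul_abs_integral_qhSpeed (hopen : IsOpen Ω) (hproper : Ω ≠ univ)
    (hγ : IsRectPath Ω x y γ) {t M : ℝ} (ht : t ∈ Icc (0 : ℝ) 1)
    (hM : infDist (γ t) (frontier Ω) < M) :
    ∀ᶠ s in 𝓝[Icc 0 1] t, ‖γ s - γ t‖ ≤ M * |∫ u in t..s, qhSpeed Ω γ u| := by
  have hnear : ∀ᶠ s in 𝓝[Icc 0 1] t, infDist (γ s) (frontier Ω) ≤ M :=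
    ((continuousOn_infDist_frontier_of_isRectPath hγ t ht).eventually_lt_const hM).mono
      fun _ => le_of_lt
  have hbetween : ∀ᶠ s in 𝓝[Icc 0 1] t, ∀ u ∈ uIcc t s,
      u ∈ Icc 0 1 ∧ infDist (γ u) (frontier Ω) ≤ M :=
    ((tendsto_const_pure.mono_right (pure_le_nhdsWithin ht)).uIcc tendsto_id).eventually
      (eventually_mem_nhdsWithin.and hnear).smallSets
  filter_upwards [hbetween] with s hs
  rcases le_total t s with hts | hst
  · rw [uIcc_of_le hts] at hs
    exact (norm_sub_le_mul_integral_qhSpeed hopen hproper hγ hts (fun u hu => (hs u hu).1)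
      fun u hu => (hs u hu).2).trans
        (mul_le_mul_of_nonneg_left (le_abs_self _) (infDist_nonneg.trans hM.le))
  · rw [uIcc_of_ge hst] at hs
    rw [norm_sub_rev, intervalIntegral.integral_symm, abs_neg]
    exact (norm_sub_le_mul_integral_qhSpeed hopen hproper hγ hst (fun u hu => (hs u hu).1)
      fun u hu => (hs u hu).2).trans
        (mul_le_mul_of_nonneg_left (le_abs_self _) (infDist_nonneg.trans hM.le))

end Length

section BoundedSpeed

variable {E : Type*} [NormedAddCommGroup E] {Ω : Set E} {x y : E} {γ : ℝ → E} {ρ ρ' : ℝ}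

/-- `γ` joins `x` to `y` in `Ω` with quasihyperbolic speed at most `ρ` at every time. The speed is
bounded through difference quotients rather than `deriv γ`, so that the bound also says something
at the points where `γ` is not differentiable. -/
structure IsPathOfQHSpeedLE (Ω : Set E) (ρ : ℝ) (x y : E) (γ : ℝ → E) : Prop where
  isRectPath : IsRectPath Ω x y γ
  nonneg : 0 ≤ ρ
  eventually_norm_sub_le : ∀ t ∈ Icc (0 : ℝ) 1, ∀ C, ρ * infDist (γ t) (frontier Ω) < C →
    ∀ᶠ s in 𝓝[Icc 0 1] t, ‖γ s - γ t‖ ≤ C * |s - t|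

namespace IsPathOfQHSpeedLE

lemma mono (hγ : IsPathOfQHSpeedLE Ω ρ x y γ) (hρ : ρ ≤ ρ') : IsPathOfQHSpeedLE Ω ρ' x y γ where
  isRectPath := hγ.isRectPath
  nonneg := hγ.nonneg.trans hρ
  eventually_norm_sub_le t ht C hC :=
    hγ.eventually_norm_sub_le t ht C
      ((mul_le_mul_of_nonneg_right hρ infDist_nonneg).trans_lt hC)

lemma norm_sub_add_infDist_le (hγ : IsPathOfQHSpeedLE Ω ρ x y γ) :
    ‖y - x‖ + infDist x (frontier Ω) ≤ infDist x (frontier Ω) * Real.exp ρ := by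
  obtain ⟨-, -, hγ0, hγ1⟩ := hγ.isRectPath
  have hslope : ∀ t ∈ Ico (0 : ℝ) 1, ∀ C, ρ * infDist (γ t) (frontier Ω) < C →
      ∃ᶠ s in 𝓝[>] t, (s - t)⁻¹ * ((‖γ s - x‖ + infDist x (frontier Ω))
        - (‖γ t - x‖ + infDist x (frontier Ω))) < C := by
    intro t ht C hC
    obtain ⟨C', hC', hC'C⟩ := exists_between hC
    have hright : 𝓝[>] t ≤ 𝓝[Icc 0 1] t := by
      rw [← nhdsWithin_Ioo_eq_nhdsGT ht.2]
      exact nhdsWithin_mono t (Ioo_subset_Icc_self.trans (Icc_subset_Icc_left ht.1))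
    have hnear := hright (hγ.eventually_norm_sub_le t (Ico_subset_Icc_self ht) C' hC')
    refine Eventually.frequently ?_
    filter_upwards [hnear, self_mem_nhdsWithin] with s hs hts
    have hts' : 0 < s - t := sub_pos.2 hts
    rw [inv_mul_lt_iff₀ hts', add_sub_add_right_eq_sub]
    calc ‖γ s - x‖ - ‖γ t - x‖ ≤ ‖γ s - γ t‖ := by
          simpa using norm_sub_norm_le (γ s - x) (γ t - x)
      _ ≤ C' * (s - t) := by rwa [abs_of_pos hts'] at hs
      _ < (s - t) * C := by rw [mul_comm]; gcongr
  have hcont : ContinuousOn (fun t => ‖γ t - x‖ + infDist x (frontier Ω)) (Icc 0 1) :=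
    (((continuousOn_of_isRectPath hγ.isRectPath).sub continuousOn_const).norm).add
      continuousOn_const
  have hbound := le_gronwallBound_of_liminf_deriv_right_le (K := ρ) (ε := 0)
    (δ := infDist x (frontier Ω)) hcont hslope (by simp [hγ0]) (fun t _ => by
      rw [add_zero, add_comm, ← dist_eq_norm]
      exact mul_le_mul_of_nonneg_left infDist_le_infDist_add_dist hγ.nonneg)
    1 (right_mem_Icc.2 zero_le_one)
  simpa [gronwallBound_ε0, hγ1] using hbound

variable [NormedSpace ℝ E]

lemma norm_deriv_le (hγ : IsPathOfQHSpeedLE Ω ρ x y γ) {t : ℝ} (ht : t ∈ Ioo (0 : ℝ) 1) :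
    ‖deriv γ t‖ ≤ ρ * infDist (γ t) (frontier Ω) := by
  refine le_of_forall_gt_imp_ge_of_dense fun C hC => ?_
  have hnear := hγ.eventually_norm_sub_le t (Ioo_subset_Icc_self ht) C hC
  rw [nhdsWithin_eq_nhds.2 (Icc_mem_nhds ht.1 ht.2)] at hnear
  exact norm_deriv_le_of_lip' ((mul_nonneg hγ.nonneg infDist_nonneg).trans hC.le) hnear

lemma qhDist_le [CompleteSpace E] (hopen : IsOpen Ω) (hproper : Ω ≠ univ)
    (hγ : IsPathOfQHSpeedLE Ω ρ x y γ) : qhDist Ω x y ≤ ρ :=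
  calc qhDist Ω x y ≤ ∫ t in (0 : ℝ)..1, qhSpeed Ω γ t := qhDist_le_qhLength hγ.isRectPath
    _ ≤ ∫ _ in (0 : ℝ)..1, ρ :=
        intervalIntegral.integral_mono_on_of_le_Ioo zero_le_one
          (intervalIntegrable_qhSpeed hopen hproper hγ.isRectPath (by simp) (by simp)) (by simp)
          fun _ ht => div_le_of_le_mul₀ infDist_nonneg hγ.nonneg (hγ.norm_deriv_le ht)
    _ = ρ := by simp

lemma convexCombination (hopen : IsOpen Ω) (hconv : Convex ℝ Ω) {x₁ y₁ x₂ y₂ : E} {γ₁ γ₂ : ℝ → E}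
    (h₁ : IsPathOfQHSpeedLE Ω ρ x₁ y₁ γ₁) (h₂ : IsPathOfQHSpeedLE Ω ρ x₂ y₂ γ₂) {a b : ℝ}
    (ha : 0 ≤ a) (hb : 0 ≤ b) (hab : a + b = 1) :
    IsPathOfQHSpeedLE Ω ρ (a • x₁ + b • x₂) (a • y₁ + b • y₂) (fun t => a • γ₁ t + b • γ₂ t) where
  isRectPath := by
    obtain ⟨⟨⟨K₁, hK₁⟩, hmaps₁, rfl, rfl⟩, -, -⟩ := h₁
    obtain ⟨⟨⟨K₂, hK₂⟩, hmaps₂, rfl, rfl⟩, -, -⟩ := h₂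
    exact ⟨⟨_, ((lipschitzWith_smul a).comp_lipschitzOnWith hK₁).add
      ((lipschitzWith_smul b).comp_lipschitzOnWith hK₂)⟩,
      fun t ht => hconv (hmaps₁ ht) (hmaps₂ ht) ha hb hab, rfl, rfl⟩
  nonneg := h₁.nonneg
  eventually_norm_sub_le t ht C hC := by
    set d₁ := infDist (γ₁ t) (frontier Ω)
    set d₂ := infDist (γ₂ t) (frontier Ω)
    set d := infDist (a • γ₁ t + b • γ₂ t) (frontier Ω)
    have hconcave : a * d₁ + b * d₂ ≤ d :=
      (concaveOn_infDist_frontier_s13 hopen hconv).2 (h₁.isRectPath.2.1 ht) (h₂.isRectPath.2.1 ht)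
        ha hb hab
    have hspeed : a * (ρ * d₁ + (C - ρ * d)) + b * (ρ * d₂ + (C - ρ * d)) ≤ C := by
      have hρ := h₁.nonneg
      linear_combination ρ * hconcave + (C - ρ * d) * hab
    filter_upwards [h₁.eventually_norm_sub_le t ht (ρ * d₁ + (C - ρ * d)) (by linarith),
      h₂.eventually_norm_sub_le t ht (ρ * d₂ + (C - ρ * d)) (by linarith)] with s hs₁ hs₂
    calc ‖a • γ₁ s + b • γ₂ s - (a • γ₁ t + b • γ₂ t)‖
        = ‖a • (γ₁ s - γ₁ t) + b • (γ₂ s - γ₂ t)‖ := by congr 1; module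
      _ ≤ a * ‖γ₁ s - γ₁ t‖ + b * ‖γ₂ s - γ₂ t‖ := by
          refine (norm_add_le _ _).trans_eq ?_
          rw [norm_smul_of_nonneg ha, norm_smul_of_nonneg hb]
      _ ≤ a * ((ρ * d₁ + (C - ρ * d)) * |s - t|) + b * ((ρ * d₂ + (C - ρ * d)) * |s - t|) := by
          gcongr
      _ = (a * (ρ * d₁ + (C - ρ * d)) + b * (ρ * d₂ + (C - ρ * d))) * |s - t| := by ring
      _ ≤ C * |s - t| := by gcongr

lemma add_smul_const (hγ : IsPathOfQHSpeedLE Ω ρ x y γ) (hρ : ρ ≤ ρ') {m : ℝ} (hm : 0 < m)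
    (hm_le : ∀ t ∈ Icc (0 : ℝ) 1, m ≤ infDist (γ t) (frontier Ω)) {v : E}
    (hv : (1 + ρ') * ‖v‖ ≤ (ρ' - ρ) * m) :
    IsPathOfQHSpeedLE Ω ρ' x (y + v) (fun t => γ t + t • v) where
  isRectPath := by
    obtain ⟨⟨⟨K, hK⟩, hmaps, rfl, rfl⟩, hρ₀, -⟩ := hγ
    refine ⟨⟨_, hK.add (ContinuousLinearMap.toSpanSingleton ℝ v).lipschitz.lipschitzOnWith⟩,
      fun t ht => ?_, by simp, by simp⟩
    have hvm : ‖v‖ < m := by nlinarith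
    refine ball_infDist_frontier_subset_s13 (hmaps ht) ?_
    calc dist (γ t + t • v) (γ t) = t * ‖v‖ := by
          rw [dist_self_add_left, norm_smul_of_nonneg ht.1]
      _ ≤ ‖v‖ := mul_le_of_le_one_left (norm_nonneg v) ht.2
      _ < infDist (γ t) (frontier Ω) := hvm.trans_le (hm_le t ht)
  nonneg := hγ.nonneg.trans hρ
  eventually_norm_sub_le t ht C hC := by
    have hdist : infDist (γ t) (frontier Ω) ≤ infDist (γ t + t • v) (frontier Ω) + ‖v‖ := by
      refine (infDist_le_infDist_add_dist (y := γ t + t • v)).trans ?_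
      rw [dist_self_add_right, norm_smul_of_nonneg ht.1]
      gcongr
      exact mul_le_of_le_one_left (norm_nonneg v) ht.2
    have hspeed : ρ * infDist (γ t) (frontier Ω) < C - ‖v‖ := by
      have h₁ := mul_le_mul_of_nonneg_left hdist (hγ.nonneg.trans hρ)
      have h₂ := mul_le_mul_of_nonneg_left (hm_le t ht) (sub_nonneg.2 hρ)
      linarith
    filter_upwards [hγ.eventually_norm_sub_le t ht _ hspeed] with s hs
    calc ‖γ s + s • v - (γ t + t • v)‖ = ‖(γ s - γ t) + (s - t) • v‖ := by congr 1; module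
      _ ≤ (C - ‖v‖) * |s - t| + |s - t| * ‖v‖ := by
          refine (norm_add_le _ _).trans (add_le_add hs ?_)
          rw [norm_smul, Real.norm_eq_abs]
      _ = C * |s - t| := by ring

end IsPathOfQHSpeedLE

end BoundedSpeed

section Reparametrization

variable {E : Type*} [NormedAddCommGroup E] [NormedSpace ℝ E] {Ω : Set E} {x y : E} {γ : ℝ → E}
  {ρ : ℝ}

/-- The quasihyperbolic arc length of `γ`, rescaled to `[0, 1]` after adding a linear term that
brings the total length up to `ρ`. The linear term keeps it strictly increasing, with Lipschitz
inverse, where `γ` stands still. -/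
noncomputable def qhArcParam (Ω : Set E) (ρ : ℝ) (γ : ℝ → E) (t : ℝ) : ℝ :=
  ((∫ u in (0 : ℝ)..t, qhSpeed Ω γ u) + (ρ - qhLength Ω γ) * t) / ρ

lemma qhArcParam_zero : qhArcParam Ω ρ γ 0 = 0 := by simp [qhArcParam]

lemma qhArcParam_one (hρ : ρ ≠ 0) : qhArcParam Ω ρ γ 1 = 1 := by
  change (qhLength Ω γ + (ρ - qhLength Ω γ) * 1) / ρ = 1
  rw [mul_one, add_sub_cancel, div_self hρ]

variable [CompleteSpace E]

lemma continuousOn_qhArcParam (hopen : IsOpen Ω) (hproper : Ω ≠ univ)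
    (hγ : IsRectPath Ω x y γ) : ContinuousOn (qhArcParam Ω ρ γ) (Icc 0 1) := by
  have hprim := intervalIntegral.continuousOn_primitive_interval'
    (intervalIntegrable_qhSpeed hopen hproper hγ (left_mem_Icc.2 zero_le_one)
      (right_mem_Icc.2 zero_le_one)) left_mem_uIcc
  rw [uIcc_of_le zero_le_one] at hprim
  exact (hprim.add (by fun_prop)).div_const ρ

lemma mul_abs_qhArcParam_sub (hopen : IsOpen Ω) (hproper : Ω ≠ univ)
    (hγ : IsRectPath Ω x y γ) (hρ : qhLength Ω γ < ρ) {s t : ℝ} (hs : s ∈ Icc (0 : ℝ) 1)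
    (ht : t ∈ Icc (0 : ℝ) 1) :
    ρ * |qhArcParam Ω ρ γ s - qhArcParam Ω ρ γ t| =
      |∫ u in t..s, qhSpeed Ω γ u| + (ρ - qhLength Ω γ) * |s - t| := by
  wlog hts : t ≤ s generalizing s t
  · rw [abs_sub_comm, this ht hs (le_of_not_ge hts), intervalIntegral.integral_symm, abs_neg,
      abs_sub_comm]
  have hρ₀ : 0 < ρ := (qhLength_nonneg Ω γ).trans_lt hρ
  have hadd : (∫ u in (0 : ℝ)..s, qhSpeed Ω γ u) - ∫ u in (0 : ℝ)..t, qhSpeed Ω γ u =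
      ∫ u in t..s, qhSpeed Ω γ u :=
    intervalIntegral.integral_interval_sub_left
      (intervalIntegrable_qhSpeed hopen hproper hγ (left_mem_Icc.2 zero_le_one) hs)
      (intervalIntegrable_qhSpeed hopen hproper hγ (left_mem_Icc.2 zero_le_one) ht)
  have hint : 0 ≤ ∫ u in t..s, qhSpeed Ω γ u :=
    intervalIntegral.integral_nonneg hts fun u _ => qhSpeed_nonneg Ω γ u
  have hlin : 0 ≤ (ρ - qhLength Ω γ) * (s - t) :=
    mul_nonneg (sub_nonneg.2 hρ.le) (sub_nonneg.2 hts)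
  have hdiff : ρ * (qhArcParam Ω ρ γ s - qhArcParam Ω ρ γ t) =
      (∫ u in t..s, qhSpeed Ω γ u) + (ρ - qhLength Ω γ) * (s - t) := by
    rw [← hadd, qhArcParam, qhArcParam, ← sub_div, mul_div_cancel₀ _ hρ₀.ne']
    ring
  rw [← abs_of_pos hρ₀, ← abs_mul, abs_of_pos hρ₀, hdiff, abs_of_nonneg (add_nonneg hint hlin),
    abs_of_nonneg hint, abs_of_nonneg (sub_nonneg.2 hts)]

lemma exists_lipschitzOnWith_invOn_qhArcParam (hopen : IsOpen Ω) (hproper : Ω ≠ univ)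
    (hγ : IsRectPath Ω x y γ) (hρ : qhLength Ω γ < ρ) :
    ∃ K ψ, LipschitzOnWith K ψ (Icc 0 1) ∧ MapsTo ψ (Icc 0 1) (Icc 0 1) ∧
      InvOn ψ (qhArcParam Ω ρ γ) (Icc 0 1) (Icc 0 1) := by
  have hρ₀ : 0 < ρ := (qhLength_nonneg Ω γ).trans_lt hρ
  have hexcess : 0 < ρ - qhLength Ω γ := sub_pos.2 hρ
  have hdist : ∀ s ∈ Icc (0 : ℝ) 1, ∀ t ∈ Icc (0 : ℝ) 1, dist s t ≤
      (ρ / (ρ - qhLength Ω γ)).toNNReal * dist (qhArcParam Ω ρ γ s) (qhArcParam Ω ρ γ t) := by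
    intro s hs t ht
    rw [Real.coe_toNNReal _ (by positivity), div_mul_eq_mul_div, le_div_iff₀ hexcess, Real.dist_eq,
      Real.dist_eq, mul_abs_qhArcParam_sub hopen hproper hγ hρ hs ht, mul_comm]
    exact le_add_of_nonneg_left (abs_nonneg _)
  have hinv := exists_lipschitzOnWith_invOn_of_dist_le zero_le_one
    (continuousOn_qhArcParam (ρ := ρ) hopen hproper hγ) hdist
  rw [qhArcParam_zero, qhArcParam_one hρ₀.ne'] at hinv
  exact ⟨_, hinv⟩

omit [CompleteSpace E] in
lemma exists_isPathOfQHSpeedLE_of_qhLength_lt [FiniteDimensional ℝ E] (hopen : IsOpen Ω)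
    (hproper : Ω ≠ univ) (hγ : IsRectPath Ω x y γ) (hρ : qhLength Ω γ < ρ) :
    ∃ σ, IsPathOfQHSpeedLE Ω ρ x y σ := by
  have : CompleteSpace E := FiniteDimensional.complete ℝ E
  have hρ₀ : 0 < ρ := (qhLength_nonneg Ω γ).trans_lt hρ
  obtain ⟨K, ψ, hψ_lip, hψ_maps, hψ_left, hψ_right⟩ :=
    exists_lipschitzOnWith_invOn_qhArcParam hopen hproper hγ hρ
  have hψ0 : ψ 0 = 0 := by simpa [qhArcParam_zero] using hψ_left (left_mem_Icc.2 zero_le_one)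
  have hψ1 : ψ 1 = 1 := by
    simpa [qhArcParam_one hρ₀.ne'] using hψ_left (right_mem_Icc.2 zero_le_one)
  obtain ⟨⟨L, hL⟩, hmaps, hγ0, hγ1⟩ := id hγ
  refine ⟨γ ∘ ψ, ⟨⟨_, hL.comp hψ_lip hψ_maps⟩, hmaps.comp hψ_maps, by simp [hψ0, hγ0],
    by simp [hψ1, hγ1]⟩, hρ₀.le, fun t ht C hC => ?_⟩
  have hM : infDist (γ (ψ t)) (frontier Ω) < C / ρ := by rwa [lt_div_iff₀' hρ₀]
  have hψ_tendsto : Tendsto ψ (𝓝[Icc 0 1] t) (𝓝[Icc 0 1] (ψ t)) :=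
    (hψ_lip.continuousOn t ht).tendsto_nhdsWithin hψ_maps
  filter_upwards [hψ_tendsto.eventually (eventually_norm_sub_le_mul_abs_integral_qhSpeed hopen
    hproper hγ (hψ_maps ht) hM), self_mem_nhdsWithin] with s hs hs01
  calc ‖γ (ψ s) - γ (ψ t)‖ ≤ C / ρ * |∫ u in ψ t..ψ s, qhSpeed Ω γ u| := hs
    _ ≤ C / ρ * (ρ * |s - t|) := by
        have harc := mul_abs_qhArcParam_sub hopen hproper hγ hρ (hψ_maps hs01) (hψ_maps ht)
        rw [hψ_right hs01, hψ_right ht] at harc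
        refine mul_le_mul_of_nonneg_left ?_ (infDist_nonneg.trans hM.le)
        rw [harc]
        exact le_add_of_nonneg_right (mul_nonneg (sub_nonneg.2 hρ.le) (abs_nonneg _))
    _ = C * |s - t| := by rw [← mul_assoc, div_mul_cancel₀ _ hρ₀.ne']

end Reparametrization

section Ball

variable {E : Type*} [NormedAddCommGroup E] [NormedSpace ℝ E] [FiniteDimensional ℝ E]
  {Ω : Set E} {x : E}

lemma mem_qhBall_iff_exists_isPathOfQHSpeedLE (hopen : IsOpen Ω) (hconv : Convex ℝ Ω)
    (hproper : Ω ≠ univ) (hx : x ∈ Ω) {y : E} {r : ℝ} :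
    y ∈ qhBall Ω x r ↔ ∃ ρ < r, ∃ γ, IsPathOfQHSpeedLE Ω ρ x y γ := by
  have : CompleteSpace E := FiniteDimensional.complete ℝ E
  constructor
  · rintro ⟨hy, hyr⟩
    obtain ⟨γ, hγ, hlt⟩ := exists_isRectPath_qhLength_lt hconv hx hy hyr
    obtain ⟨ρ, hρ, hρr⟩ := exists_between hlt
    exact ⟨ρ, hρr, exists_isPathOfQHSpeedLE_of_qhLength_lt hopen hproper hγ hρ⟩
  · rintro ⟨ρ, hρr, γ, hγ⟩
    obtain ⟨-, hmaps, -, rfl⟩ := hγ.isRectPath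
    exact ⟨hmaps (right_mem_Icc.2 zero_le_one), (hγ.qhDist_le hopen hproper).trans_lt hρr⟩

lemma convex_qhBall (hopen : IsOpen Ω) (hconv : Convex ℝ Ω) (hproper : Ω ≠ univ) (hx : x ∈ Ω)
    (r : ℝ) : Convex ℝ (qhBall Ω x r) := by
  intro y hy z hz a b ha hb hab
  rw [mem_qhBall_iff_exists_isPathOfQHSpeedLE hopen hconv hproper hx] at hy hz ⊢
  obtain ⟨ρ₁, hρ₁, γ₁, h₁⟩ := hy
  obtain ⟨ρ₂, hρ₂, γ₂, h₂⟩ := hz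
  refine ⟨max ρ₁ ρ₂, max_lt hρ₁ hρ₂, fun t => a • γ₁ t + b • γ₂ t, ?_⟩
  simpa only [Convex.combo_self hab] using (h₁.mono (le_max_left ρ₁ ρ₂)).convexCombination hopen
    hconv (h₂.mono (le_max_right ρ₁ ρ₂)) ha hb hab

lemma isOpen_qhBall (hopen : IsOpen Ω) (hconv : Convex ℝ Ω) (hproper : Ω ≠ univ) (hx : x ∈ Ω)
    (r : ℝ) : IsOpen (qhBall Ω x r) := by
  rw [Metric.isOpen_iff]
  intro y hy
  obtain ⟨ρ, hρr, γ, hγ⟩ :=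
    (mem_qhBall_iff_exists_isPathOfQHSpeedLE hopen hconv hproper hx).1 hy
  obtain ⟨ρ', hρρ', hρ'r⟩ := exists_between hρr
  obtain ⟨t₀, ht₀, hmin⟩ := isCompact_Icc.exists_isMinOn (nonempty_Icc.2 zero_le_one)
    (continuousOn_infDist_frontier_of_isRectPath hγ.isRectPath)
  set m := infDist (γ t₀) (frontier Ω)
  have hm : 0 < m := infDist_frontier_pos_s13 hopen hproper (hγ.isRectPath.2.1 ht₀)
  have hρ' : 0 < 1 + ρ' := by linarith [hγ.nonneg]
  refine ⟨(ρ' - ρ) * m / (1 + ρ'), div_pos (mul_pos (sub_pos.2 hρρ') hm) hρ', fun z hz => ?_⟩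
  have hv : (1 + ρ') * ‖z - y‖ ≤ (ρ' - ρ) * m := by
    rw [← le_div_iff₀' hρ', ← dist_eq_norm]
    exact (mem_ball.1 hz).le
  have hpath := hγ.add_smul_const hρρ'.le hm (fun t ht => hmin ht) hv
  rw [add_sub_cancel] at hpath
  exact (mem_qhBall_iff_exists_isPathOfQHSpeedLE hopen hconv hproper hx).2 ⟨ρ', hρ'r, _, hpath⟩

lemma isBounded_qhBall (hopen : IsOpen Ω) (hconv : Convex ℝ Ω) (hproper : Ω ≠ univ) (hx : x ∈ Ω)
    (r : ℝ) : Bornology.IsBounded (qhBall Ω x r) := by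
  refine (isBounded_closedBall (x := x)
    (r := infDist x (frontier Ω) * Real.exp r - infDist x (frontier Ω))).subset fun y hy => ?_
  obtain ⟨ρ, hρr, γ, hγ⟩ :=
    (mem_qhBall_iff_exists_isPathOfQHSpeedLE hopen hconv hproper hx).1 hy
  rw [mem_closedBall, dist_eq_norm, le_sub_iff_add_le]
  exact (hγ.mono hρr.le).norm_sub_add_infDist_le

theorem qh_ball_strictly_convex_of_convex_domain_general (hopen : IsOpen Ω) (hconv : Convex ℝ Ω)
    (hproper : Ω ≠ univ) (hx : x ∈ Ω) (r : ℝ) : StrictlyConvexSet (qhBall Ω x r) :=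
  strictlyConvexSet_of_convex_of_isOpen_of_isBounded (convex_qhBall hopen hconv hproper hx r)
    (isOpen_qhBall hopen hconv hproper hx r) (isBounded_qhBall hopen hconv hproper hx r)

end Ball

end QuasihyperbolicConvexity

/-- in a convex proper subdomain of `ℝⁿ`, all quasihyperbolic balls are
strictly convex. -/
theorem qh_ball_strictly_convex_of_convex_domain (n : ℕ) (hn : 2 ≤ n)
    (Ω : Set (EuclideanSpace ℝ (Fin n)))
    (hopen : IsOpen Ω) (hne : Ω.Nonempty) (hconv : Convex ℝ Ω) (hproper : Ω ≠ univ)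
    (x : EuclideanSpace ℝ (Fin n)) (hx : x ∈ Ω) (r : ℝ) (hr : 0 < r) :
    StrictlyConvexSet (qhBall Ω x r) :=
  qh_ball_strictly_convex_of_convex_domain_general hopen hconv hproper hx r
end
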